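/- Let s ≥ 3 and e ≥ 1 be integers. In R(1,2^e)^{⊗s}, where R(1,2^e) = (ZMod 2)[x]/(x^{2^e+1}), the element z_{2,1}^{2^{e+1}−1} · z_{3,1}^{2^e+1} · z_{4,1}^{2^e} · … · z_{s,1}^{2^e} is nonzero (the factors z_{i,1}^{2^e} for 4 ≤ i ≤ s being omitted if s = 3). -/

import Mathlib

/-!
Write `q = p ^ e`, and let `a, b, c` be the generators of the first three tensor factors, so that
`a ^ (q + 1) = b ^ (q + 1) = c ^ (q + 1) = 0`. Since `(a + b) ^ q = a ^ q + b ^ q`, a factor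
`a + b` next to `a ^ q` may be replaced by `b`, and next to `b ^ q` by `a`. Hence

* `(a + b) ^ (2 q - 1) = a ^ q b ^ (q - 1) + a ^ (q - 1) b ^ q`,
* `(a + c) ^ (q + 1) = a ^ q c + a c ^ q`,

and in the product of these two the powers of `a` have exponents `2 q`, `q + 1`, `2 q - 1`, `q`, so
for `q ≥ 2` only `a ^ q b ^ q c ^ q` survives. As `a ^ q` is now present, every further factor
`(a + x_i) ^ q = a ^ q + x_i ^ q` may be replaced by `x_i ^ q`. The whole product is therefore a
pure tensor with entries `x_i ^ q` and `1`, and over a field a pure tensor of nonzero vectors is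
nonzero.
-/

open scoped TensorProduct

/-- Complete homogeneous symmetric polynomial of degree `d` in a list of elements
of a commutative (semi)ring: `h_d(l)`. -/
noncomputable def completeHomog {R : Type*} [CommSemiring R] : List R → ℕ → R
  | [], 0 => 1
  | [], _ + 1 => 0
  | x :: l, d => ∑ t ∈ Finset.range (d + 1), x ^ t * completeHomog l (d - t)

/-- Elementary symmetric polynomial of degree `d` in a list of elements: `e_d(l)`. -/
noncomputable def elemSymm {R : Type*} [CommSemiring R] : List R → ℕ → R
  | _, 0 => 1
  | [], _ + 1 => 0
  | x :: l, d + 1 => elemSymm l (d + 1) + x * elemSymm l d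

/-- The ideal of `(ZMod 2)[x_1, …, x_k]` generated by the complete homogeneous
symmetric polynomials `h_{m+i}(x_1, …, x_{k+1-i})` for `1 ≤ i ≤ k`. -/
noncomputable def flagIdeal (k m : ℕ) : Ideal (MvPolynomial (Fin k) (ZMod 2)) :=
  Ideal.span { p | ∃ i : ℕ, 1 ≤ i ∧ i ≤ k ∧
    p = completeHomog (((List.finRange k).take (k + 1 - i)).map MvPolynomial.X) (m + i) }

/-- `R(k,m)`, the quotient of `(ZMod 2)[x_1, …, x_k]` by `flagIdeal k m`;
this is the mod-2 cohomology ring of the real flag manifold `F(1^k, m)`. -/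
abbrev FlagRing (k m : ℕ) : Type :=
  MvPolynomial (Fin k) (ZMod 2) ⧸ flagIdeal k m

/-- The image of the variable `x_{j+1}` in `R(k,m)` (`j` is 0-indexed). -/
noncomputable def xGen (k m : ℕ) (j : Fin k) : FlagRing k m :=
  Ideal.Quotient.mk (flagIdeal k m) (MvPolynomial.X j)

/-- The zero-divisor `z_{j+1} = x_{j+1} ⊗ 1 + 1 ⊗ x_{j+1}` in `R(k,m) ⊗ R(k,m)`. -/
noncomputable def zGen (k m : ℕ) (j : Fin k) :
    FlagRing k m ⊗[ZMod 2] FlagRing k m :=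
  xGen k m j ⊗ₜ 1 + 1 ⊗ₜ xGen k m j

/-- `x_{i+1,j+1}` in the `s`-fold tensor power `R(k,m)^{⊗ s}`: the element having
`x_{j+1}` in the `(i+1)`-st tensor factor and `1` elsewhere (`i`, `j` 0-indexed). -/
noncomputable def xT (k m s : ℕ) (i : Fin s) (j : Fin k) :
    ⨂[ZMod 2] _ : Fin s, FlagRing k m :=
  PiTensorProduct.tprod (ZMod 2) (fun t => if t = i then xGen k m j else 1)

/-- The `s`-th zero-divisor `z_{i+1,j+1} = x_{1,j+1} + x_{i+1,j+1}` in `R(k,m)^{⊗ s}`. -/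
noncomputable def zT (k m s : ℕ) (hs : 0 < s) (i : Fin s) (j : Fin k) :
    ⨂[ZMod 2] _ : Fin s, FlagRing k m :=
  xT k m s ⟨0, hs⟩ j + xT k m s i j

section CommRing

variable {A : Type*} [CommRing A]

theorem mul_prod_add_of_mul_eq_zero {ι : Type*} {c d : A} (h : c * d = 0) (s : Finset ι)
    (f : ι → A) : c * ∏ i ∈ s, (d + f i) = c * ∏ i ∈ s, f i := by
  classical
  induction s using Finset.induction_on with
  | empty => simp
  | insert i s hi ih =>
    rw [Finset.prod_insert hi, Finset.prod_insert hi]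
    linear_combination (d + f i) * ih + (∏ j ∈ s, f j) * h

theorem mul_add_pow_of_mul_eq_zero {c d : A} (h : c * d = 0) (x : A) (n : ℕ) :
    c * (d + x) ^ n = c * x ^ n := by
  simpa using mul_prod_add_of_mul_eq_zero h (Finset.range n) fun _ => x

variable (p : ℕ) [ExpChar A p] {e : ℕ} {a b c : A}

theorem add_pow_two_mul_expChar_pow_sub_one (ha : a ^ (p ^ e + 1) = 0)
    (hb : b ^ (p ^ e + 1) = 0) :
    (a + b) ^ (2 * p ^ e - 1) = a ^ p ^ e * b ^ (p ^ e - 1) + a ^ (p ^ e - 1) * b ^ p ^ e := by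
  have hq : 0 < p ^ e := pow_pos (expChar_pos A p) e
  have ha' : a ^ p ^ e * a = 0 := by rw [← pow_succ, ha]
  have hb' : b ^ p ^ e * b = 0 := by rw [← pow_succ, hb]
  calc (a + b) ^ (2 * p ^ e - 1)
      = (a + b) ^ p ^ e * (a + b) ^ (p ^ e - 1) := by rw [← pow_add]; congr 1; omega
    _ = a ^ p ^ e * (a + b) ^ (p ^ e - 1) + b ^ p ^ e * (b + a) ^ (p ^ e - 1) := by
      rw [add_pow_expChar_pow, add_mul, add_comm b a]
    _ = a ^ p ^ e * b ^ (p ^ e - 1) + b ^ p ^ e * a ^ (p ^ e - 1) := by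
      rw [mul_add_pow_of_mul_eq_zero ha', mul_add_pow_of_mul_eq_zero hb']
    _ = _ := by rw [mul_comm (b ^ p ^ e)]

theorem add_pow_expChar_pow_add_one (ha : a ^ (p ^ e + 1) = 0) (hc : c ^ (p ^ e + 1) = 0) :
    (a + c) ^ (p ^ e + 1) = a ^ p ^ e * c + a * c ^ p ^ e := by
  rw [pow_succ, add_pow_expChar_pow]
  linear_combination ha + hc

theorem add_pow_mul_add_pow_eq_mul_pow (hq : 2 ≤ p ^ e) (ha : a ^ (p ^ e + 1) = 0)
    (hb : b ^ (p ^ e + 1) = 0) (hc : c ^ (p ^ e + 1) = 0) :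
    (a + b) ^ (2 * p ^ e - 1) * (a + c) ^ (p ^ e + 1) =
      a ^ p ^ e * b ^ p ^ e * c ^ p ^ e := by
  rw [add_pow_two_mul_expChar_pow_sub_one p ha hb, add_pow_expChar_pow_add_one p ha hc]
  obtain ⟨n, hn⟩ : ∃ n, p ^ e = n + 2 := ⟨p ^ e - 2, by omega⟩
  rw [hn] at ha ⊢
  rw [show n + 2 - 1 = n + 1 by omega]
  linear_combination (a ^ (n + 1) * b ^ (n + 1) * c + b ^ (n + 1) * c ^ (n + 2)
    + a ^ n * b ^ (n + 2) * c) * ha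

theorem add_pow_mul_add_pow_mul_prod_add_pow {ι : Type*} (hq : 2 ≤ p ^ e)
    (ha : a ^ (p ^ e + 1) = 0) (hb : b ^ (p ^ e + 1) = 0) (hc : c ^ (p ^ e + 1) = 0)
    (s : Finset ι) (f : ι → A) :
    (a + b) ^ (2 * p ^ e - 1) * (a + c) ^ (p ^ e + 1) * ∏ i ∈ s, (a + f i) ^ p ^ e =
      a ^ p ^ e * b ^ p ^ e * c ^ p ^ e * ∏ i ∈ s, f i ^ p ^ e := by
  have haa : a ^ p ^ e * a ^ p ^ e = 0 := by
    rw [← pow_add]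
    exact pow_eq_zero_of_le (by omega) ha
  simp only [add_pow_mul_add_pow_eq_mul_pow p hq ha hb hc, add_pow_expChar_pow]
  exact mul_prod_add_of_mul_eq_zero
    (by linear_combination b ^ p ^ e * c ^ p ^ e * haa) s fun i => f i ^ p ^ e

end CommRing

section PiTensorProduct

open PiTensorProduct

variable {ι : Type*} [Finite ι]

theorem tprod_ne_zero {R : Type*} [CommRing R] [IsDomain R] {M : ι → Type*}
    [∀ i, AddCommGroup (M i)] [∀ i, Module R (M i)] [∀ i, Module.Projective R (M i)]
    {v : ∀ i, M i} (hv : ∀ i, v i ≠ 0) : tprod R v ≠ 0 := by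
  have := Fintype.ofFinite ι
  choose φ hφ using fun i => Module.Projective.exists_dual_ne_zero R (hv i)
  have hprod : dualDistrib (tprod R φ) (tprod R v) ≠ 0 := by
    rw [dualDistrib_apply]
    exact Finset.prod_ne_zero_iff.mpr fun i _ => hφ i
  intro h
  exact hprod (by rw [h, map_zero])

variable [DecidableEq ι] {K : Type*} [Field K] {B : ι → Type*} [∀ i, CommRing (B i)]
  [∀ i, Algebra K (B i)]

theorem prod_singleAlgHom_ne_zero {y : ∀ i, B i} (hy : ∀ i, y i ≠ 0) (s : Finset ι) :
    ∏ i ∈ s, singleAlgHom (R := K) (A := B) i (y i) ≠ 0 := by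
  simp only [singleAlgHom_apply, ← tprod_prod]
  refine tprod_ne_zero fun t => ?_
  have := nontrivial_of_ne _ _ (hy t)
  rw [Finset.prod_apply]
  simp only [MonoidHom.mulSingle_apply, Finset.prod_pi_mulSingle]
  split_ifs
  exacts [hy t, one_ne_zero]

/-- In odd characteristic the zero-divisors are differences of generators; they are covered by
taking for `x i₀` the negative of a generator. -/
theorem statement16_general (p : ℕ) [Fact p.Prime] [CharP K p] {e : ℕ} (he : e ≠ 0)
    {x : ∀ i, B i} (hx : ∀ i, x i ^ (p ^ e + 1) = 0) (hx' : ∀ i, x i ^ p ^ e ≠ 0)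
    {i₀ i₁ i₂ : ι} {s : Finset ι} (h₀ : i₀ ∉ insert i₁ (insert i₂ s))
    (h₁ : i₁ ∉ insert i₂ s) (h₂ : i₂ ∉ s) :
    let X (i : ι) : ⨂[K] i, B i := singleAlgHom i (x i)
    (X i₀ + X i₁) ^ (2 * p ^ e - 1) * (X i₀ + X i₂) ^ (p ^ e + 1) *
      ∏ i ∈ s, (X i₀ + X i) ^ p ^ e ≠ 0 := by
  intro X
  have hX (i : ι) : X i ^ (p ^ e + 1) = 0 := by rw [← map_pow, hx, map_zero]
  have hprod : ∏ i ∈ insert i₀ (insert i₁ (insert i₂ s)), X i ^ p ^ e ≠ 0 := by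
    simpa only [X, map_pow] using prod_singleAlgHom_ne_zero (K := K) hx' _
  have := nontrivial_of_ne _ _ hprod
  have : ExpChar (⨂[K] i, B i) p := expChar_of_injective_algebraMap (algebraMap K _).injective p
  have hq : 2 ≤ p ^ e := (Fact.out : p.Prime).two_le.trans (Nat.le_self_pow he p)
  rw [add_pow_mul_add_pow_mul_prod_add_pow p hq (hX i₀) (hX i₁) (hX i₂)]
  simpa only [Finset.prod_insert h₀, Finset.prod_insert h₁, Finset.prod_insert h₂,
    mul_assoc] using hprod

end PiTensorProduct

section FlagRing

theorem completeHomog_singleton {R : Type*} [CommSemiring R] (x : R) (d : ℕ) :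
    completeHomog [x] d = x ^ d := by
  have hnil {n : ℕ} (hn : n ≠ 0) : completeHomog ([] : List R) n = 0 := by
    obtain ⟨r, rfl⟩ := Nat.exists_eq_succ_of_ne_zero hn
    rfl
  rw [completeHomog, Finset.sum_range_succ, Finset.sum_eq_zero, zero_add, Nat.sub_self,
    completeHomog, mul_one]
  intro t ht
  rw [hnil (Nat.sub_ne_zero_of_lt (Finset.mem_range.mp ht)), mul_zero]

theorem flagIdeal_one (m : ℕ) : flagIdeal 1 m = Ideal.span {MvPolynomial.X 0 ^ (m + 1)} := by
  unfold flagIdeal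
  congr 1
  ext f
  constructor
  · rintro ⟨i, hi, hi', rfl⟩
    obtain rfl : i = 1 := le_antisymm hi' hi
    exact completeHomog_singleton _ _
  · rintro rfl
    exact ⟨1, le_rfl, le_rfl, (completeHomog_singleton _ _).symm⟩

theorem xGen_one_pow_eq_zero_iff {m n : ℕ} : xGen 1 m 0 ^ n = 0 ↔ m < n := by
  have hX : Prime (MvPolynomial.X 0 : MvPolynomial (Fin 1) (ZMod 2)) := MvPolynomial.X_prime
  rw [xGen, ← map_pow, Ideal.Quotient.eq_zero_iff_mem, flagIdeal_one, Ideal.mem_span_singleton,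
    pow_dvd_pow_iff hX.ne_zero hX.not_isUnit, Nat.succ_le_iff]

theorem xT_eq_singleAlgHom (k m s : ℕ) (i : Fin s) (j : Fin k) :
    xT k m s i j = PiTensorProduct.singleAlgHom i (xGen k m j) := by
  simp only [xT, PiTensorProduct.singleAlgHom_apply, MonoidHom.mulSingle_apply]
  congr 1
  ext t
  rw [Pi.mulSingle_apply]

end FlagRing

/-- for `s ≥ 3` and `e ≥ 1`, in `R(1, 2^e)^{⊗s}` (with
`R(1, 2^e) = (ZMod 2)[x]/(x^{2^e+1})`) one has
`z_{2,1}^{2^{e+1}-1} · z_{3,1}^{2^e+1} · z_{4,1}^{2^e} ⋯ z_{s,1}^{2^e} ≠ 0`. -/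
theorem statement16 (s e : ℕ) (hs : 3 ≤ s) (he : 1 ≤ e) :
    zT 1 (2 ^ e) s (by omega) ⟨1, by omega⟩ 0 ^ (2 ^ (e + 1) - 1) *
      zT 1 (2 ^ e) s (by omega) ⟨2, by omega⟩ 0 ^ (2 ^ e + 1) *
      ∏ i ∈ Finset.univ.filter (fun i : Fin s => 3 ≤ i.val),
        zT 1 (2 ^ e) s (by omega) i 0 ^ (2 ^ e) ≠ 0 := by
  simp only [zT, xT_eq_singleAlgHom, pow_succ' 2 e]
  exact statement16_general 2 (by omega) (fun _ => xGen_one_pow_eq_zero_iff.mpr (by omega))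
    (fun _ => xGen_one_pow_eq_zero_iff.not.mpr (by omega)) (by simp) (by simp) (by simp)
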